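/- Let X be a compact Hausdorff space and let k be a continuous symmetric positive definite kernel on X with RKHS H. Then k is c-universal if and only if ∫_X ∫_X k(x,y) dμ(x) dμ(y) > 0 for every nonzero μ ∈ M_b(X). -/

import Mathlib

open MeasureTheory Filter Topology RealInnerProductSpace

/-- Integral of a vector-valued function with respect to a finite signed measure,
defined via the Jordan decomposition. -/
noncomputable def svInt {X : Type*} [MeasurableSpace X] {E : Type*}
    [NormedAddCommGroup E] [NormedSpace ℝ E]
    (μ : MeasureTheory.SignedMeasure X) (f : X → E) : E :=
  (∫ x, f x ∂μ.toJordanDecomposition.posPart) - ∫ x, f x ∂μ.toJordanDecomposition.negPart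

/-- A measure dominated by a finite inner regular measure is inner regular. -/
theorem MeasureTheory.Measure.InnerRegular.of_le {X : Type*} [TopologicalSpace X]
    [T2Space X] [MeasurableSpace X] [OpensMeasurableSpace X] {μ ν : Measure X}
    [IsFiniteMeasure ν] (hν : ν.InnerRegular) (h : μ ≤ ν) :
    μ.InnerRegular := by
  refine ⟨fun A hA r hr => ?_⟩
  obtain ⟨K, hKA, hK, hlt⟩ :=
    hA.exists_isCompact_sdiff_lt (measure_ne_top ν A) (tsub_pos_of_lt hr).ne'
  refine ⟨K, hKA, hK, ?_⟩
  have hsum : μ A ≤ μ K + μ (A \ K) := by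
    simpa [Set.union_sdiff_cancel hKA] using measure_union_le (μ := μ) K (A \ K)
  by_contra! hle
  have : μ (A \ K) < μ A - r := (h _).trans_lt hlt
  have hAtop : μ A ≠ ⊤ := ((h A).trans_lt (measure_lt_top ν A)).ne
  have : μ K + μ (A \ K) < r + (μ A - r) :=
    ENNReal.add_lt_add_of_le_of_lt (hle.trans_lt (hr.trans hAtop.lt_top)).ne hle this
  rw [add_tsub_cancel_of_le hr.le] at this
  exact absurd hsum this.not_ge

/-- The total variation of a difference of finite measures is dominated by their sum. -/
theorem MeasureTheory.SignedMeasure.totalVariation_sub_toSignedMeasure_le {X : Type*}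
    [MeasurableSpace X] (μ ν : Measure X) [IsFiniteMeasure μ] [IsFiniteMeasure ν] :
    (μ.toSignedMeasure - ν.toSignedMeasure).totalVariation ≤ μ + ν := by
  rw [SignedMeasure.totalVariation_eq_variation]
  apply VectorMeasure.variation_le_of_forall_enorm_le
  intro A hA
  rw [sub_apply, Measure.toSignedMeasure_apply_measurable hA,
    Measure.toSignedMeasure_apply_measurable hA, Measure.add_apply]
  refine enorm_sub_le.trans (add_le_add ?_ ?_) <;>
    simp [Real.enorm_of_nonneg, measureReal_nonneg]

section SignedIntegral

variable {X : Type*} [MeasurableSpace X] {E : Type*} [NormedAddCommGroup E]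

/-- The integral against a signed measure may be computed from any representation of it as a
difference of finite measures. -/
theorem svInt_sub_toSignedMeasure [NormedSpace ℝ E] (μ ν : Measure X) [IsFiniteMeasure μ]
    [IsFiniteMeasure ν] {f : X → E} (hf : ∀ (ρ : Measure X) [IsFiniteMeasure ρ], Integrable f ρ) :
    svInt (μ.toSignedMeasure - ν.toSignedMeasure) f = (∫ x, f x ∂μ) - ∫ x, f x ∂ν := by
  set s := μ.toSignedMeasure - ν.toSignedMeasure with hs
  have hJ : s.toJordanDecomposition.posPart.toSignedMeasure
      - s.toJordanDecomposition.negPart.toSignedMeasure = s :=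
    s.toSignedMeasure_toJordanDecomposition
  have key : s.toJordanDecomposition.posPart + ν = μ + s.toJordanDecomposition.negPart := by
    rw [← Measure.toSignedMeasure_eq_toSignedMeasure_iff, Measure.toSignedMeasure_add,
      Measure.toSignedMeasure_add, ← sub_eq_sub_iff_add_eq_add, hJ, hs]
  have hint := congrArg (fun ρ : Measure X => ∫ x, f x ∂ρ) key
  simp only [integral_add_measure (hf _) (hf _)] at hint
  rw [svInt, sub_eq_sub_iff_add_eq_add, hint]

theorem svInt_inner_left [InnerProductSpace ℝ E] [CompleteSpace E] (μ : SignedMeasure X)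
    {f : X → E} (hf : ∀ (ρ : Measure X) [IsFiniteMeasure ρ], Integrable f ρ) (v : E) :
    svInt μ (fun x => ⟪v, f x⟫) = ⟪v, svInt μ f⟫ := by
  simp only [svInt, inner_sub_right]
  rw [integral_inner (hf _), integral_inner (hf _)]

end SignedIntegral

section Functionals

variable {X : Type*} [TopologicalSpace X] [CompactSpace X]

theorem Continuous.integrable_of_compactSpace [MeasurableSpace X] [OpensMeasurableSpace X]
    {E : Type*} [NormedAddCommGroup E] {f : X → E} (hf : Continuous f) (μ : Measure X)
    [IsFiniteMeasure μ] : Integrable f μ :=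
  hf.integrable_of_hasCompactSupport (HasCompactSupport.of_compactSpace f)

/-- Every bounded functional on `C(X, ℝ)` is a difference of two positive functionals. They come
from a Hahn–Banach extension of `(h, -h) ↦ L h` to `C(X, ℝ) × C(X, ℝ)`, dominated by a multiple of
the norm of the positive part. -/
theorem ContinuousMap.exists_positive_sub_eq (L : C(X, ℝ) →L[ℝ] ℝ) :
    ∃ P N : C(X, ℝ) →ₗ[ℝ] ℝ, (∀ f, 0 ≤ f → 0 ≤ P f) ∧ (∀ f, 0 ≤ f → 0 ≤ N f) ∧
      ∀ f, L f = P f - N f := by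
  let q : C(X, ℝ) → ℝ := fun f => ‖f ⊔ 0‖
  have q_smul : ∀ c : ℝ, 0 < c → ∀ f, q (c • f) = c * q f := by
    intro c hc f
    have : (c • f) ⊔ 0 = c • (f ⊔ 0) := by
      ext x
      simp [mul_max_of_nonneg _ _ hc.le]
    simp only [q, this, norm_smul, Real.norm_of_nonneg hc.le]
  have q_add : ∀ f g, q (f + g) ≤ q f + q g := by
    intro f g
    refine le_trans ?_ (norm_add_le _ _)
    refine (ContinuousMap.norm_le _ (norm_nonneg _)).2 fun x => ?_
    refine le_trans ?_ (ContinuousMap.norm_coe_le_norm _ x)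
    simp only [ContinuousMap.sup_apply, ContinuousMap.add_apply, ContinuousMap.zero_apply]
    rw [Real.norm_of_nonneg (le_max_right _ _),
      Real.norm_of_nonneg (add_nonneg (le_max_right _ _) (le_max_right _ _))]
    exact max_le (add_le_add (le_max_left _ _) (le_max_left _ _))
      (add_nonneg (le_max_right _ _) (le_max_right _ _))
  have q_nonpos : ∀ f, f ≤ 0 → q f = 0 := fun f hf => by simp [q, sup_eq_right.2 hf]
  have norm_le : ∀ f, ‖f‖ ≤ max (q f) (q (-f)) := by
    intro f
    refine (ContinuousMap.norm_le _ (le_max_of_le_left (norm_nonneg _))).2 fun x => ?_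
    have h₁ := (le_abs_self _).trans (ContinuousMap.norm_coe_le_norm (f ⊔ 0) x)
    have h₂ := (le_abs_self _).trans (ContinuousMap.norm_coe_le_norm (-f ⊔ 0) x)
    refine abs_le'.2 ⟨le_max_of_le_left ((le_max_left _ _).trans h₁),
      le_max_of_le_right ((le_max_left _ _).trans h₂)⟩
  let D : Submodule ℝ (C(X, ℝ) × C(X, ℝ)) :=
    LinearMap.ker (LinearMap.fst ℝ C(X, ℝ) C(X, ℝ) + LinearMap.snd ℝ C(X, ℝ) C(X, ℝ))
  let F : (C(X, ℝ) × C(X, ℝ)) →ₗ.[ℝ] ℝ :=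
    ⟨D, (L.toLinearMap ∘ₗ LinearMap.fst ℝ C(X, ℝ) C(X, ℝ)) ∘ₗ D.subtype⟩
  obtain ⟨G, hG, hGle⟩ := exists_extension_of_le_sublinear F
    (fun u => ‖L‖ * max (q u.1) (q u.2))
    (fun c hc u => by
      simp only [Prod.smul_fst, Prod.smul_snd, q_smul c hc, ← mul_max_of_nonneg _ _ hc.le]
      ring)
    (fun u v => by
      rw [← mul_add]
      refine mul_le_mul_of_nonneg_left (max_le ?_ ?_) (norm_nonneg L)
      · exact (q_add _ _).trans (add_le_add (le_max_left _ _) (le_max_left _ _))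
      · exact (q_add _ _).trans (add_le_add (le_max_right _ _) (le_max_right _ _)))
    (by
      rintro ⟨⟨f, g⟩, hfg⟩
      have hg : g = -f := (neg_eq_of_add_eq_zero_right (LinearMap.mem_ker.1 hfg)).symm
      subst hg
      change L f ≤ _
      exact (le_abs_self _).trans ((L.le_opNorm f).trans
        (mul_le_mul_of_nonneg_left (norm_le f) (norm_nonneg L))))
  have G_nonneg : ∀ f g, 0 ≤ f → 0 ≤ g → 0 ≤ G (f, g) := by
    intro f g hf hg
    have h := hGle (-(f, g))
    simp only [Prod.fst_neg, Prod.snd_neg, q_nonpos _ (neg_nonpos.2 hf),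
      q_nonpos _ (neg_nonpos.2 hg), max_self, mul_zero, map_neg] at h
    linarith
  refine ⟨G ∘ₗ LinearMap.inl ℝ _ _, G ∘ₗ LinearMap.inr ℝ _ _,
    fun f hf => G_nonneg _ _ hf le_rfl, fun f hf => G_nonneg _ _ le_rfl hf, fun f => ?_⟩
  have h := hG ⟨(f, -f), by simp [F, D]⟩
  change G (f, -f) = L f at h
  simp only [LinearMap.comp_apply, LinearMap.inl_apply, LinearMap.inr_apply]
  rw [← map_sub, ← h]
  simp

variable [MeasurableSpace X] [BorelSpace X]

theorem svInt_eq_zero_of_mem_closure {μ : SignedMeasure X} {S : Set C(X, ℝ)}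
    (hS : ∀ f ∈ S, svInt μ f = 0) {g : C(X, ℝ)} (hg : g ∈ closure S) : svInt μ g = 0 := by
  have hcont : ∀ (ρ : Measure X) [IsFiniteMeasure ρ],
      Continuous fun f : C(X, ℝ) => ∫ x, f x ∂ρ := by
    intro ρ _
    refine (continuous_integral.comp (ContinuousMap.toLp (E := ℝ) 1 ρ ℝ).continuous).congr
      fun f => integral_congr_ae (ContinuousMap.coeFn_toLp ρ f)
  have hclosed : IsClosed {f : C(X, ℝ) | svInt μ f = 0} :=
    isClosed_eq ((hcont _).sub (hcont _)) continuous_const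
  exact closure_minimal hS hclosed hg

variable [T2Space X]

theorem ContinuousMap.exists_regular_integral_eq (P : C(X, ℝ) →ₗ[ℝ] ℝ)
    (hP : ∀ f, 0 ≤ f → 0 ≤ P f) :
    ∃ μ : Measure X, IsFiniteMeasure μ ∧ μ.Regular ∧ ∀ f : C(X, ℝ), ∫ x, f x ∂μ = P f := by
  let Λ : CompactlySupportedContinuousMap X ℝ →ₚ[ℝ] ℝ := PositiveLinearMap.mk₀
    { toFun := fun f => P f.toContinuousMap
      map_add' := fun f g => P.map_add f.toContinuousMap g.toContinuousMap
      map_smul' := fun c f => P.map_smul c f.toContinuousMap }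
    (fun f hf => hP _ hf)
  exact ⟨RealRMK.rieszMeasure Λ, inferInstance, inferInstance, fun f =>
    RealRMK.integral_rieszMeasure Λ (CompactlySupportedContinuousMap.continuousMapEquiv f)⟩

/-- Bounded functionals on `C(X, ℝ)` are given by signed Radon measures. -/
theorem ContinuousMap.exists_signedMeasure_svInt_eq (L : C(X, ℝ) →L[ℝ] ℝ) :
    ∃ μ : SignedMeasure X, μ.totalVariation.InnerRegular ∧ ∀ f : C(X, ℝ), svInt μ f = L f := by
  obtain ⟨P, N, hP, hN, hL⟩ := ContinuousMap.exists_positive_sub_eq L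
  obtain ⟨μ, _, _, hμ⟩ := ContinuousMap.exists_regular_integral_eq P hP
  obtain ⟨ν, _, _, hν⟩ := ContinuousMap.exists_regular_integral_eq N hN
  refine ⟨μ.toSignedMeasure - ν.toSignedMeasure, ?_, fun f => ?_⟩
  · exact Measure.InnerRegular.of_le (ν := μ + ν) inferInstance
      (SignedMeasure.totalVariation_sub_toSignedMeasure_le μ ν)
  · rw [svInt_sub_toSignedMeasure μ ν fun ρ _ => f.continuous.integrable_of_compactSpace ρ,
      hμ, hν, hL]

/-- A signed Radon measure annihilating all continuous functions vanishes. -/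
theorem MeasureTheory.SignedMeasure.eq_zero_of_svInt_eq_zero {μ : SignedMeasure X}
    (hμ : μ.totalVariation.InnerRegular) (h : ∀ f : C(X, ℝ), svInt μ f = 0) : μ = 0 := by
  have hpos : μ.toJordanDecomposition.posPart.InnerRegular :=
    hμ.of_le (Measure.le_add_right le_rfl)
  have hneg : μ.toJordanDecomposition.negPart.InnerRegular :=
    hμ.of_le (Measure.le_add_left le_rfl)
  have heq : μ.toJordanDecomposition.posPart = μ.toJordanDecomposition.negPart :=
    Measure.ext_of_integral_eq_on_compactlySupported fun f => sub_eq_zero.1 (h f.toContinuousMap)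
  rw [← μ.toSignedMeasure_toJordanDecomposition, JordanDecomposition.toSignedMeasure]
  exact sub_eq_zero.2 (Measure.toSignedMeasure_congr heq)

end Functionals

/-- Let `X` be a compact Hausdorff space and `k` a continuous symmetric
positive definite kernel on `X` with RKHS `H`.  Then `k` is c-universal iff
`∫∫ k(x,y) dμ(x) dμ(y) > 0` for every nonzero finite signed Radon measure `μ` on `X`. -/
theorem stmt3
    {X : Type*} [TopologicalSpace X] [CompactSpace X] [T2Space X]
    [MeasurableSpace X] [BorelSpace X]
    (k : X → X → ℝ) (hkcont : Continuous fun p : X × X => k p.1 p.2)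
    {H : Type*} [NormedAddCommGroup H] [InnerProductSpace ℝ H] [CompleteSpace H]
    (T : H →ₗ[ℝ] (X → ℝ)) (hT : Function.Injective T)
    (Φ : X → H)
    (hk : ∀ x y : X, k x y = ⟪Φ x, Φ y⟫)
    (hrepro : ∀ (f : H) (x : X), T f x = ⟪f, Φ x⟫) :
    (∀ (g : C(X, ℝ)) (ε : ℝ), 0 < ε → ∃ f : H, ∀ x : X, |T f x - g x| ≤ ε) ↔
      ∀ μ : MeasureTheory.SignedMeasure X, μ.totalVariation.InnerRegular → μ ≠ 0 →
        0 < svInt μ (fun x => svInt μ (fun y => k x y)) := by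
  have hΦ : Continuous Φ := by
    rw [continuous_iff_continuousAt]
    intro x
    rw [ContinuousAt, tendsto_iff_norm_sub_tendsto_zero]
    have hsq : Tendsto (fun y => k y y - 2 * k y x + k x x) (𝓝 x) (𝓝 0) := by
      have hc : Continuous fun y => k y y - 2 * k y x + k x x :=
        ((hkcont.comp (continuous_id.prodMk continuous_id)).sub
          (continuous_const.mul (hkcont.comp (continuous_id.prodMk continuous_const)))).add
          continuous_const
      simpa [two_mul] using hc.tendsto x
    have hnorm : ∀ y, ‖Φ y - Φ x‖ = √(k y y - 2 * k y x + k x x) := fun y => by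
      rw [hk, hk, hk, real_inner_self_eq_norm_sq, real_inner_self_eq_norm_sq,
        ← norm_sub_sq_real, Real.sqrt_sq (norm_nonneg _)]
    simpa [hnorm] using hsq.sqrt
  have hΦint : ∀ (ρ : Measure X) [IsFiniteMeasure ρ], Integrable Φ ρ :=
    fun ρ _ => hΦ.integrable_of_compactSpace ρ
  have hdouble : ∀ μ : SignedMeasure X,
      svInt μ (fun x => svInt μ (fun y => k x y)) = ‖svInt μ Φ‖ ^ 2 := by
    intro μ
    simp only [hk, svInt_inner_left μ hΦint]
    simp_rw [real_inner_comm (svInt μ Φ)]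
    rw [svInt_inner_left μ hΦint, real_inner_self_eq_norm_sq]
  have hTint : ∀ (μ : SignedMeasure X) (f : H), svInt μ (T f) = ⟪f, svInt μ Φ⟫ := by
    intro μ f
    rw [← svInt_inner_left μ hΦint]
    exact congrArg (svInt μ) (funext (hrepro f))
  let S : H →ₗ[ℝ] C(X, ℝ) :=
    { toFun := fun f => ⟨T f, by
        rw [funext (hrepro f)]
        exact continuous_const.inner hΦ⟩
      map_add' := fun f g => by ext; simp
      map_smul' := fun c f => by ext; simp }
  simp only [hdouble]
  constructor
  · intro hdense μ hμ hne
    refine pow_pos (norm_pos_iff.2 fun hzero => hne ?_) 2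
    refine SignedMeasure.eq_zero_of_svInt_eq_zero hμ fun g => ?_
    refine svInt_eq_zero_of_mem_closure (S := Set.range S) ?_
      (Metric.mem_closure_iff.2 fun ε hε => ?_)
    · rintro _ ⟨f, rfl⟩
      exact (hTint μ f).trans (by rw [hzero, inner_zero_right])
    · obtain ⟨f, hf⟩ := hdense g (ε / 2) (half_pos hε)
      refine ⟨S f, ⟨f, rfl⟩, ?_⟩
      rw [dist_comm]
      exact ((ContinuousMap.dist_le (half_pos hε).le).2 hf).trans_lt (half_lt_self hε)
  · intro hpos g ε hε
    by_contra! hfar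
    have hg : g ∉ (LinearMap.range S).topologicalClosure := by
      intro hmem
      obtain ⟨_, ⟨f, rfl⟩, hf⟩ := Metric.mem_closure_iff.1 hmem ε hε
      obtain ⟨x, hx⟩ := hfar f
      rw [dist_comm] at hf
      exact absurd ((ContinuousMap.dist_apply_le_dist x).trans hf.le) (not_le.2 hx)
    obtain ⟨L, u, hLu, hLg⟩ := geometric_hahn_banach_closed_point
      (LinearMap.range S).topologicalClosure.convex
      (LinearMap.range S).isClosed_topologicalClosure hg
    have hu : 0 < u := by simpa using hLu 0 (zero_mem _)
    have hLS : ∀ f, L (S f) = 0 := by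
      intro f
      by_contra hne
      have h := hLu (S ((u / L (S f)) • f))
        ((LinearMap.range S).le_topologicalClosure ⟨_, rfl⟩)
      rw [map_smul, map_smul, smul_eq_mul, div_mul_cancel₀ _ hne] at h
      exact lt_irrefl _ h
    obtain ⟨μ, hμ, hμL⟩ := ContinuousMap.exists_signedMeasure_svInt_eq L
    have hμne : μ ≠ 0 := by
      rintro rfl
      have : L g = 0 := by rw [← hμL]; simp [svInt, SignedMeasure.toJordanDecomposition_zero]
      linarith
    have hzero : svInt μ Φ = 0 := by
      rw [← inner_self_eq_zero (𝕜 := ℝ), ← hTint]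
      exact (hμL (S _)).trans (hLS _)
    simpa [hzero] using hpos μ hμ hμne
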